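/- arXiv:0803.0923 — 4 statements merged into one kernel-verified Lean document; each statement's English description precedes it below -/
import Mathlib

section
/- There exist h₀ > 0 and C > 0 such that for every h ∈ (0,h₀) and every (s,ξ,ζ) ∈ Ω the matrix ∇_hΨ⁽ʰ⁾(s,ξ,ζ) is invertible and ‖(∇_hΨ⁽ʰ⁾(s,ξ,ζ))⁻¹ − R₀(s)ᵀ + h R₀(s)ᵀ[(ξν₂′(s) + ζν₃′(s)) ⊗ e₁] R₀(s)ᵀ‖ ≤ C h², where a ⊗ e₁ denotes the 3×3 matrix whose first column is a and whose other two columns vanish; in particular (∇_hΨ⁽ʰ⁾)⁻¹ → R₀ᵀ uniformly on Ω as h → 0. -/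
open MeasureTheory Set

noncomputable section

abbrev M3 : Type := Matrix (Fin 3) (Fin 3) ℝ

/-- The special orthogonal group `SO(3)` as a set of `3 × 3` real matrices. -/
def SO3 : Set M3 := {R : M3 | R.transpose * R = 1 ∧ R.det = 1}

/-- The Frobenius norm of a `3 × 3` real matrix. -/
def frob3 (F : M3) : ℝ := Real.sqrt (∑ i, ∑ j, (F i j) ^ 2)

/-- The Frobenius distance from a matrix to `SO(3)`. -/
def distSO3 (F : M3) : ℝ := sInf ((fun R => frob3 (F - R)) '' SO3)

/-- The Euclidean norm on `ℝ³`. -/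
def enorm3 (v : Fin 3 → ℝ) : ℝ := Real.sqrt (∑ i, (v i) ^ 2)

/-- The `3 × 3` matrix with the three given columns. -/
def colMat (a b c : Fin 3 → ℝ) : M3 :=
  Matrix.of fun i j => if j = 0 then a i else if j = 1 then b i else c i

/-- `a ⊗ e₁` : the `3 × 3` matrix whose first column is `a` and whose other columns vanish. -/
def tensE1 (a : Fin 3 → ℝ) : M3 := Matrix.of fun i j => if j = 0 then a i else 0

/-- The normal vector `ν₂(s) = R₀(s) e₂`. -/
def nu2 (R₀ : ℝ → M3) (s : ℝ) : Fin 3 → ℝ := (R₀ s).mulVec (Pi.single 1 1)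

/-- The normal vector `ν₃(s) = R₀(s) e₃`. -/
def nu3 (R₀ : ℝ → M3) (s : ℝ) : Fin 3 → ℝ := (R₀ s).mulVec (Pi.single 2 1)

/-- The parametrization `Ψ⁽ʰ⁾(s,ξ,ζ) = γ(s) + hξν₂(s) + hζν₃(s)` of the thin beam. -/
def Psih (γ : ℝ → Fin 3 → ℝ) (R₀ : ℝ → M3) (h : ℝ) (p : ℝ × ℝ × ℝ) : Fin 3 → ℝ :=
  γ p.1 + (h * p.2.1) • nu2 R₀ p.1 + (h * p.2.2) • nu3 R₀ p.1

/-- The scaled gradient `∇_h z = (∂_s z | h⁻¹ ∂_ξ z | h⁻¹ ∂_ζ z)` as a `3 × 3` matrix. -/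
def scaledGrad (h : ℝ) (z : ℝ × ℝ × ℝ → Fin 3 → ℝ) (p : ℝ × ℝ × ℝ) : M3 :=
  Matrix.of fun i j =>
    if j = 0 then deriv (fun t => z (t, p.2.1, p.2.2) i) p.1
    else if j = 1 then h⁻¹ * deriv (fun t => z (p.1, t, p.2.2) i) p.2.1
    else h⁻¹ * deriv (fun t => z (p.1, p.2.1, t) i) p.2.2

/-!
With `a = ξ ν₂' + ζ ν₃'`, the frame condition `R₀ e₁ = γ'` gives the exact formula
`∇_h Ψ⁽ʰ⁾ = R₀ + h (a ⊗ e₁)`. Applying the resolvent identity twice,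
`(R + t)⁻¹ - R⁻¹ + R⁻¹ t R⁻¹ = (R⁻¹ t)² (R + t)⁻¹`, and the right-hand side is `O(‖t‖²)` with a
constant depending only on `‖R⁻¹‖` once `‖R⁻¹‖ ‖t‖ ≤ 1/2`. Compactness of the interval and
boundedness of the cross-section make this uniform for any continuous invertible `R₀`; for values in
`SO(3)` the inverse is the transpose.
-/

section RingInverse

open scoped Ring

theorem ringInverse_sub_ringInverse_add {A : Type*} [Ring A] {a t : A} (ha : IsUnit a)
    (hat : IsUnit (a + t)) : a⁻¹ʳ - (a + t)⁻¹ʳ = a⁻¹ʳ * t * (a + t)⁻¹ʳ := by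
  rw [Ring.inverse_sub_inverse (iff_of_true ha hat), add_sub_cancel_left]

theorem ringInverse_add_sub_add {A : Type*} [Ring A] {a t : A} (ha : IsUnit a)
    (hat : IsUnit (a + t)) :
    (a + t)⁻¹ʳ - a⁻¹ʳ + a⁻¹ʳ * t * a⁻¹ʳ = a⁻¹ʳ * t * a⁻¹ʳ * t * (a + t)⁻¹ʳ := by
  have resolvent := ringInverse_sub_ringInverse_add ha hat
  calc (a + t)⁻¹ʳ - a⁻¹ʳ + a⁻¹ʳ * t * a⁻¹ʳ
      = a⁻¹ʳ * t * a⁻¹ʳ - (a⁻¹ʳ - (a + t)⁻¹ʳ) := by abel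
    _ = a⁻¹ʳ * t * (a⁻¹ʳ - (a + t)⁻¹ʳ) := by rw [mul_sub, ← resolvent]
    _ = a⁻¹ʳ * t * a⁻¹ʳ * t * (a + t)⁻¹ʳ := by rw [resolvent]; simp only [mul_assoc]

variable {A : Type*} [NormedRing A] {a t : A}

theorem isUnit_add_of_norm_ringInverse_mul_norm_lt_one [HasSummableGeomSeries A] (ha : IsUnit a)
    (ht : ‖a⁻¹ʳ‖ * ‖t‖ < 1) : IsUnit (a + t) := by
  have hsmall : ‖-(a⁻¹ʳ * t)‖ < 1 := by
    rw [norm_neg]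
    exact (norm_mul_le _ _).trans_lt ht
  have hfactor : a + t = a * (1 - -(a⁻¹ʳ * t)) := by
    rw [sub_neg_eq_add, mul_add, mul_one, Ring.mul_inverse_cancel_left _ _ ha]
  exact hfactor ▸ ha.mul (isUnit_one_sub_of_norm_lt_one hsmall)

theorem one_sub_mul_norm_ringInverse_add_le (ha : IsUnit a) (hat : IsUnit (a + t)) :
    (1 - ‖a⁻¹ʳ‖ * ‖t‖) * ‖(a + t)⁻¹ʳ‖ ≤ ‖a⁻¹ʳ‖ := by
  have hinv : (a + t)⁻¹ʳ = a⁻¹ʳ - a⁻¹ʳ * t * (a + t)⁻¹ʳ := by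
    rw [← ringInverse_sub_ringInverse_add ha hat, sub_sub_cancel]
  have hle : ‖(a + t)⁻¹ʳ‖ ≤ ‖a⁻¹ʳ‖ + ‖a⁻¹ʳ‖ * ‖t‖ * ‖(a + t)⁻¹ʳ‖ := by
    conv_lhs => rw [hinv]
    exact (norm_sub_le _ _).trans (by gcongr; exact norm_mul₃_le)
  linarith

theorem norm_ringInverse_add_sub_add_le (ha : IsUnit a) (hat : IsUnit (a + t))
    (ht : ‖a⁻¹ʳ‖ * ‖t‖ ≤ 1 / 2) :
    ‖(a + t)⁻¹ʳ - a⁻¹ʳ + a⁻¹ʳ * t * a⁻¹ʳ‖ ≤ 2 * ‖a⁻¹ʳ‖ ^ 3 * ‖t‖ ^ 2 := by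
  have hinv : ‖(a + t)⁻¹ʳ‖ ≤ 2 * ‖a⁻¹ʳ‖ := by
    have hhalf : 1 / 2 * ‖(a + t)⁻¹ʳ‖ ≤ (1 - ‖a⁻¹ʳ‖ * ‖t‖) * ‖(a + t)⁻¹ʳ‖ := by
      gcongr
      linarith
    linarith [one_sub_mul_norm_ringInverse_add_le ha hat]
  calc ‖(a + t)⁻¹ʳ - a⁻¹ʳ + a⁻¹ʳ * t * a⁻¹ʳ‖
      = ‖a⁻¹ʳ * t * a⁻¹ʳ * t * (a + t)⁻¹ʳ‖ := by rw [ringInverse_add_sub_add ha hat]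
    _ ≤ ‖a⁻¹ʳ‖ * ‖t‖ * ‖a⁻¹ʳ‖ * ‖t‖ * ‖(a + t)⁻¹ʳ‖ := by
      refine norm_mul₃_le.trans ?_
      gcongr
      exact norm_mul₃_le
    _ ≤ ‖a⁻¹ʳ‖ * ‖t‖ * ‖a⁻¹ʳ‖ * ‖t‖ * (2 * ‖a⁻¹ʳ‖) := by gcongr
    _ = 2 * ‖a⁻¹ʳ‖ ^ 3 * ‖t‖ ^ 2 := by ring

theorem exists_norm_ringInverse_add_smul_le_of_isCompact [HasSummableGeomSeries A] {𝕜 X : Type*}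
    [NormedField 𝕜] [NormedAlgebra 𝕜 A] [TopologicalSpace X] {S : Set X} (hS : IsCompact S)
    {u v : X → A} (hu : ContinuousOn u S) (hv : ContinuousOn v S) (hunit : ∀ x ∈ S, IsUnit (u x)) :
    ∃ h₀ : ℝ, 0 < h₀ ∧ ∃ C : ℝ, 0 < C ∧ ∀ h : 𝕜, ‖h‖ < h₀ → ∀ x ∈ S, IsUnit (u x + h • v x) ∧
      ‖(u x + h • v x)⁻¹ʳ - (u x)⁻¹ʳ + h • ((u x)⁻¹ʳ * v x * (u x)⁻¹ʳ)‖ ≤ C * ‖h‖ ^ 2 := by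
  have huinv : ContinuousOn (fun x ↦ (u x)⁻¹ʳ) S := fun x hx ↦
    ContinuousAt.comp_continuousWithinAt (f := u)
      (NormedRing.inverse_continuousAt (hunit x hx).unit) (hu x hx)
  obtain ⟨c, hc, hcS⟩ := (hS.image_of_continuousOn huinv).isBounded.exists_pos_norm_le
  obtain ⟨m, hm, hmS⟩ := (hS.image_of_continuousOn hv).isBounded.exists_pos_norm_le
  refine ⟨1 / (2 * (c * m)), by positivity, 2 * c ^ 3 * m ^ 2, by positivity, fun h hh x hx ↦ ?_⟩
  have hux : ‖(u x)⁻¹ʳ‖ ≤ c := hcS _ (mem_image_of_mem _ hx)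
  have hvx : ‖h • v x‖ ≤ ‖h‖ * m :=
    (norm_smul_le _ _).trans (by gcongr; exact hmS _ (mem_image_of_mem _ hx))
  have hsmall : ‖(u x)⁻¹ʳ‖ * ‖h • v x‖ ≤ 1 / 2 := by
    rw [lt_div_iff₀ (by positivity)] at hh
    calc ‖(u x)⁻¹ʳ‖ * ‖h • v x‖ ≤ c * (‖h‖ * m) := by gcongr
      _ ≤ 1 / 2 := by linarith
  have hadd : IsUnit (u x + h • v x) :=
    isUnit_add_of_norm_ringInverse_mul_norm_lt_one (hunit x hx) (by linarith)
  refine ⟨hadd, ?_⟩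
  rw [← smul_mul_assoc, ← mul_smul_comm]
  calc _ ≤ 2 * ‖(u x)⁻¹ʳ‖ ^ 3 * ‖h • v x‖ ^ 2 :=
        norm_ringInverse_add_sub_add_le (hunit x hx) hadd hsmall
    _ ≤ 2 * c ^ 3 * (‖h‖ * m) ^ 2 := by gcongr
    _ = 2 * c ^ 3 * m ^ 2 * ‖h‖ ^ 2 := by ring

end RingInverse

section Frobenius

open scoped Matrix.Norms.Frobenius

theorem frob3_eq_norm (F : M3) : frob3 F = ‖F‖ := by
  simp only [frob3, Matrix.frobenius_norm_def, Real.sqrt_eq_rpow, Real.norm_eq_abs, Real.rpow_two,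
    sq_abs]

theorem exists_frob3_inv_add_smul_le_of_isCompact {X : Type*} [TopologicalSpace X] {S : Set X}
    (hS : IsCompact S) {R T : X → M3} (hR : ContinuousOn R S) (hT : ContinuousOn T S)
    (hunit : ∀ x ∈ S, IsUnit (R x)) :
    ∃ h₀ : ℝ, 0 < h₀ ∧ ∃ C : ℝ, 0 < C ∧ ∀ h : ℝ, |h| < h₀ → ∀ x ∈ S, IsUnit (R x + h • T x) ∧
      frob3 ((R x + h • T x)⁻¹ - (R x)⁻¹ + h • ((R x)⁻¹ * T x * (R x)⁻¹)) ≤ C * h ^ 2 := by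
  have : CompleteSpace M3 := FiniteDimensional.complete ℝ M3
  simpa only [frob3_eq_norm, Matrix.nonsing_inv_eq_ringInverse, Real.norm_eq_abs, sq_abs] using
    exists_norm_ringInverse_add_smul_le_of_isCompact (𝕜 := ℝ) hS hR hT hunit

end Frobenius

section Frame

theorem nu2_apply (R₀ : ℝ → M3) (s : ℝ) (i : Fin 3) : nu2 R₀ s i = R₀ s i 1 := by
  simp [nu2]

theorem nu3_apply (R₀ : ℝ → M3) (s : ℝ) (i : Fin 3) : nu3 R₀ s i = R₀ s i 2 := by
  simp [nu3]

variable {R₀ : ℝ → M3}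

theorem contDiff_nu2 {n : WithTop ℕ∞} (hR₀ : ∀ i, ContDiff ℝ n fun s ↦ R₀ s i 1) :
    ContDiff ℝ n (nu2 R₀) :=
  contDiff_pi.2 fun i ↦ by simpa only [nu2_apply] using hR₀ i

theorem contDiff_nu3 {n : WithTop ℕ∞} (hR₀ : ∀ i, ContDiff ℝ n fun s ↦ R₀ s i 2) :
    ContDiff ℝ n (nu3 R₀) :=
  contDiff_pi.2 fun i ↦ by simpa only [nu3_apply] using hR₀ i

theorem continuous_tensE1 : Continuous tensE1 :=
  continuous_matrix fun i j ↦ by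
    by_cases hj : j = 0 <;> simp only [tensE1, Matrix.of_apply, hj, if_true, if_false] <;> fun_prop

theorem colMat_mulVec_single_add_smul (R : M3) (h : ℝ) (a : Fin 3 → ℝ) :
    colMat (R.mulVec (Pi.single 0 1) + h • a) (R.mulVec (Pi.single 1 1))
      (R.mulVec (Pi.single 2 1)) = R + h • tensE1 a := by
  ext i j
  fin_cases j <;> simp [colMat, tensE1]

theorem scaledGrad_eq_colMat {h : ℝ} {z : ℝ × ℝ × ℝ → Fin 3 → ℝ} {s ξ ζ : ℝ} {a b c : Fin 3 → ℝ}
    (ha : HasDerivAt (fun t ↦ z (t, ξ, ζ)) a s) (hb : HasDerivAt (fun t ↦ z (s, t, ζ)) b ξ)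
    (hc : HasDerivAt (fun t ↦ z (s, ξ, t)) c ζ) :
    scaledGrad h z (s, ξ, ζ) = colMat a (h⁻¹ • b) (h⁻¹ • c) := by
  ext i j
  simp only [scaledGrad, colMat, Matrix.of_apply, (hasDerivAt_pi.1 ha i).deriv,
    (hasDerivAt_pi.1 hb i).deriv, (hasDerivAt_pi.1 hc i).deriv, Pi.smul_apply, smul_eq_mul]

theorem hasDerivAt_const_mul_smul {𝕜 E : Type*} [NontriviallyNormedField 𝕜]
    [NormedAddCommGroup E] [NormedSpace 𝕜 E] (c x : 𝕜) (v : E) :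
    HasDerivAt (fun t ↦ (c * t) • v) (c • v) x := by
  simpa using ((hasDerivAt_id x).const_mul c).smul_const v

theorem scaledGrad_Psih {γ : ℝ → Fin 3 → ℝ} {h : ℝ} (hh : h ≠ 0) {s : ℝ}
    (hγ : HasDerivAt γ ((R₀ s).mulVec (Pi.single 0 1)) s) (hν₂ : DifferentiableAt ℝ (nu2 R₀) s)
    (hν₃ : DifferentiableAt ℝ (nu3 R₀) s) (ξ ζ : ℝ) :
    scaledGrad h (Psih γ R₀ h) (s, ξ, ζ) =
      R₀ s + h • tensE1 (ξ • deriv (nu2 R₀) s + ζ • deriv (nu3 R₀) s) := by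
  have hs : HasDerivAt (fun t ↦ Psih γ R₀ h (t, ξ, ζ))
      ((R₀ s).mulVec (Pi.single 0 1) + h • (ξ • deriv (nu2 R₀) s + ζ • deriv (nu3 R₀) s)) s := by
    rw [smul_add, smul_smul, smul_smul, ← add_assoc]
    exact (hγ.add (hν₂.hasDerivAt.const_smul (h * ξ))).add (hν₃.hasDerivAt.const_smul (h * ζ))
  have hξ : HasDerivAt (fun t ↦ Psih γ R₀ h (s, t, ζ)) (h • nu2 R₀ s) ξ :=
    ((hasDerivAt_const_mul_smul h ξ (nu2 R₀ s)).const_add (γ s)).add_const ((h * ζ) • nu3 R₀ s)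
  have hζ : HasDerivAt (fun t ↦ Psih γ R₀ h (s, ξ, t)) (h • nu3 R₀ s) ζ :=
    (hasDerivAt_const_mul_smul h ζ (nu3 R₀ s)).const_add (γ s + (h * ξ) • nu2 R₀ s)
  rw [scaledGrad_eq_colMat hs hξ hζ, inv_smul_smul₀ hh, inv_smul_smul₀ hh]
  exact colMat_mulVec_single_add_smul _ _ _

end Frame

theorem scaledGrad_Psih_inv_expansion_general {K : Set ℝ} (hK : IsCompact K)
    {γ : ℝ → Fin 3 → ℝ} {R₀ : ℝ → M3} (hR₀C1 : ∀ i j, ContDiff ℝ 1 fun s ↦ R₀ s i j)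
    (hR₀unit : ∀ s ∈ K, IsUnit (R₀ s))
    (hγ : ∀ s ∈ K, HasDerivAt γ ((R₀ s).mulVec (Pi.single 0 1)) s)
    {Dset : Set (ℝ × ℝ)} (hDbdd : Bornology.IsBounded Dset) :
    ∃ h₀ : ℝ, 0 < h₀ ∧ ∃ C : ℝ, 0 < C ∧ ∀ h : ℝ, h ≠ 0 → |h| < h₀ → ∀ p ∈ K ×ˢ Dset,
      IsUnit (scaledGrad h (Psih γ R₀ h) p) ∧
      frob3 ((scaledGrad h (Psih γ R₀ h) p)⁻¹ - (R₀ p.1)⁻¹ +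
          h • ((R₀ p.1)⁻¹ *
            tensE1 (p.2.1 • deriv (nu2 R₀) p.1 + p.2.2 • deriv (nu3 R₀) p.1) *
            (R₀ p.1)⁻¹)) ≤ C * h ^ 2 := by
  have hν₂ := contDiff_nu2 fun i ↦ hR₀C1 i 1
  have hν₃ := contDiff_nu3 fun i ↦ hR₀C1 i 2
  have hR : Continuous fun p : ℝ × ℝ × ℝ ↦ R₀ p.1 :=
    continuous_matrix fun i j ↦ (hR₀C1 i j).continuous.comp continuous_fst
  have hT : Continuous fun p : ℝ × ℝ × ℝ ↦
      tensE1 (p.2.1 • deriv (nu2 R₀) p.1 + p.2.2 • deriv (nu3 R₀) p.1) := by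
    have := hν₂.continuous_deriv_one
    have := hν₃.continuous_deriv_one
    exact continuous_tensE1.comp (by fun_prop)
  obtain ⟨h₀, hh₀, C, hC, expansion⟩ := exists_frob3_inv_add_smul_le_of_isCompact
    (hK.prod hDbdd.isCompact_closure) hR.continuousOn hT.continuousOn
    fun p hp ↦ hR₀unit p.1 hp.1
  refine ⟨h₀, hh₀, C, hC, fun h hne hh p hp ↦ ?_⟩
  rw [scaledGrad_Psih hne (hγ _ hp.1) (hν₂.differentiable_one _) (hν₃.differentiable_one _)]
  exact expansion h hh p ⟨hp.1, subset_closure hp.2⟩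

theorem scaledGrad_Psih_inv_expansion
    (L : ℝ) (hL : 0 < L)
    (γ : ℝ → Fin 3 → ℝ) (hγ : ContDiff ℝ 2 γ)
    (harc : ∀ s ∈ Icc (0:ℝ) L, enorm3 (deriv γ s) = 1)
    (hγinj : InjOn γ (Icc (0:ℝ) L))
    (R₀ : ℝ → M3) (hR₀C1 : ∀ i j, ContDiff ℝ 1 fun s => R₀ s i j)
    (hR₀SO : ∀ s ∈ Icc (0:ℝ) L, R₀ s ∈ SO3)
    (hR₀e1 : ∀ s ∈ Icc (0:ℝ) L, (R₀ s).mulVec (Pi.single 0 1) = deriv γ s)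
    (Dset : Set (ℝ × ℝ)) (hDopen : IsOpen Dset) (hDconn : IsConnected Dset)
    (hDbdd : Bornology.IsBounded Dset) (hDvol : volume Dset = 1) :
    ∃ h₀ : ℝ, 0 < h₀ ∧ ∃ C : ℝ, 0 < C ∧
      ∀ h ∈ Ioo (0:ℝ) h₀, ∀ p ∈ Ioo (0:ℝ) L ×ˢ Dset,
        IsUnit (scaledGrad h (Psih γ R₀ h) p) ∧
        frob3 ((scaledGrad h (Psih γ R₀ h) p)⁻¹ - (R₀ p.1).transpose +
            h • ((R₀ p.1).transpose *
              tensE1 (p.2.1 • deriv (nu2 R₀) p.1 + p.2.2 • deriv (nu3 R₀) p.1) *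
              (R₀ p.1).transpose)) ≤ C * h ^ 2 := by
  have frame {s : ℝ} (hs : s ∈ Icc 0 L) : (R₀ s)⁻¹ = (R₀ s).transpose :=
    Matrix.inv_eq_left_inv (hR₀SO s hs).1
  obtain ⟨h₀, hh₀, C, hC, expansion⟩ := scaledGrad_Psih_inv_expansion_general isCompact_Icc hR₀C1
    (fun s hs ↦ .of_mul_eq_one_right _ (hR₀SO s hs).1)
    (fun s hs ↦ hR₀e1 s hs ▸ (hγ.differentiable two_ne_zero s).hasDerivAt) hDbdd
  refine ⟨h₀, hh₀, C, hC, fun h hh p hp ↦ ?_⟩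
  have hs : p.1 ∈ Icc 0 L := Ioo_subset_Icc_self hp.1
  simpa only [frame hs] using
    expansion h hh.1.ne' (by rw [abs_of_pos hh.1]; exact hh.2) p ⟨hs, hp.2⟩
end
end

section
/- There exists h₀ > 0 such that for every h ∈ (0,h₀) the map Ψ⁽ʰ⁾ is injective on [0,L] × cl(D). -/
open MeasureTheory Set

noncomputable section

/-!
The map `Ψ⁽ʰ⁾` is the unscaled tube map `Ψ⁽¹⁾` precomposed with the rescaling
`(s, y) ↦ (s, h • y)` of the cross-section. On the compact core `[0, L] × {0}` the tube map agrees
with `γ`, hence is injective, and its derivative there has the columns `γ'`, `ν₂`, `ν₃`, so the tube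
map is also injective near each point of the core. A compactness argument combines the two into
injectivity on `[0, L] × V` for some neighbourhood `V` of `0`, and `V` contains `h • closure D` as
soon as `h` is small because `D` is bounded.
-/

section

open Filter Topology

theorem exists_mem_nhds_injOn_of_hasStrictFDerivAt {𝕜 E F : Type*} [NontriviallyNormedField 𝕜]
    [NormedAddCommGroup E] [NormedSpace 𝕜 E] [NormedAddCommGroup F] [NormedSpace 𝕜 F]
    {f : E → F} {f' : E →L[𝕜] F} {x : E} (hf : HasStrictFDerivAt f f' x)
    (hf' : IsInducing f') : ∃ u ∈ 𝓝 x, InjOn f u := by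
  have hsep : ∀ᶠ p in 𝓝 x ×ˢ 𝓝 x, f p.1 = f p.2 → p.1 = p.2 := by
    rw [← nhds_prod_eq]
    simpa only [sub_eq_zero] using (hf.isTheta_sub hf').isBigO_symm.eq_zero_imp
  obtain ⟨u, hu, hinj⟩ := eventually_prod_self_iff'.1 hsep
  exact ⟨u, hu, fun a ha b hb => hinj a ha b hb⟩

theorem exists_mem_nhds_injOn_prod {X Y Z : Type*} [TopologicalSpace X] [TopologicalSpace Y]
    [TopologicalSpace Z] [T2Space Z] {f : X × Y → Z} {K : Set X} {y : Y} (hK : IsCompact K)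
    (hinj : InjOn (fun x => f (x, y)) K) (hcont : ∀ x ∈ K, ContinuousAt f (x, y))
    (hloc : ∀ x ∈ K, ∃ u ∈ 𝓝 (x, y), InjOn f u) :
    ∃ V ∈ 𝓝 y, InjOn f (K ×ˢ V) := by
  have hcore : InjOn f (K ×ˢ {y}) := by
    rintro ⟨a, _⟩ ⟨ha, rfl⟩ ⟨b, _⟩ ⟨hb, rfl⟩ hab
    exact Prod.ext (hinj ha hb hab) rfl
  obtain ⟨t, ht, htinj⟩ := hcore.exists_mem_nhdsSet (hK.prod isCompact_singleton)
    (by rintro ⟨a, _⟩ ⟨ha, rfl⟩; exact hcont a ha)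
    (by rintro ⟨a, _⟩ ⟨ha, rfl⟩; exact hloc a ha)
  rw [hK.nhdsSet_prod_eq isCompact_singleton, nhdsSet_singleton, mem_prod_iff] at ht
  obtain ⟨U, hU, V, hV, hUV⟩ := ht
  exact ⟨V, hV, htinj.mono ((prod_mono_left (subset_of_mem_nhdsSet hU)).trans hUV)⟩

theorem eventually_injOn_prod_smul {𝕜 X Y Z : Type*} [NormedField 𝕜] [AddCommGroup Y]
    [Module 𝕜 Y] [TopologicalSpace Y] {f : X × Y → Z} {K : Set X} {V S : Set Y} (hV : V ∈ 𝓝 0)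
    (hS : Bornology.IsVonNBounded 𝕜 S) (hinj : InjOn f (K ×ˢ V)) :
    ∀ᶠ c : 𝕜 in 𝓝[≠] 0, InjOn (fun p => f (p.1, c • p.2)) (K ×ˢ S) := by
  filter_upwards [(hS hV).eventually_nhdsNE_zero, self_mem_nhdsWithin] with c hcS hc
  have hmaps : MapsTo (Prod.map id (c • ·)) (K ×ˢ S) (K ×ˢ V) := (mapsTo_id K).prodMap hcS
  have hrescale : Function.Injective (Prod.map id (c • ·) : X × Y → X × Y) :=
    Function.injective_id.prodMap (smul_right_injective Y hc)
  exact hinj.comp hrescale.injOn hmaps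

theorem eventually_injOn_prod_smul_of_hasStrictFDerivAt {𝕜 E F G : Type*}
    [NontriviallyNormedField 𝕜] [NormedAddCommGroup E] [NormedSpace 𝕜 E] [NormedAddCommGroup F]
    [NormedSpace 𝕜 F] [NormedAddCommGroup G] [NormedSpace 𝕜 G] {f : E × F → G}
    {f' : E → E × F →L[𝕜] G} {K : Set E} {S : Set F} (hK : IsCompact K)
    (hinj : InjOn (fun x => f (x, 0)) K) (hf : ∀ x ∈ K, HasStrictFDerivAt f (f' x) (x, 0))
    (hf' : ∀ x ∈ K, IsInducing (f' x)) (hS : Bornology.IsVonNBounded 𝕜 S) :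
    ∀ᶠ c : 𝕜 in 𝓝[≠] 0, InjOn (fun p => f (p.1, c • p.2)) (K ×ˢ S) := by
  obtain ⟨V, hV, hVinj⟩ := exists_mem_nhds_injOn_prod hK hinj
    (fun x hx => (hf x hx).continuousAt)
    (fun x hx => exists_mem_nhds_injOn_of_hasStrictFDerivAt (hf x hx) (hf' x hx))
  exact eventually_injOn_prod_smul hV hS hVinj

/-- The linear map `ℝ × ℝ × ℝ → E` with columns `a`, `b`, `c`, used for the derivative of `Ψ⁽¹⁾`.
Its domain is the product on which `Psih` is defined, which a matrix would have to identify with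
`Fin 3 → ℝ`. -/
def colMap {E : Type*} [AddCommGroup E] [Module ℝ E] [TopologicalSpace E] [ContinuousAdd E]
    [ContinuousSMul ℝ E] (a b c : E) : ℝ × ℝ × ℝ →L[ℝ] E :=
  (ContinuousLinearMap.toSpanSingleton ℝ a).coprod
    ((ContinuousLinearMap.toSpanSingleton ℝ b).coprod (ContinuousLinearMap.toSpanSingleton ℝ c))

section colMap

variable {E : Type*} [AddCommGroup E] [Module ℝ E] [TopologicalSpace E] [ContinuousAdd E]
  [ContinuousSMul ℝ E] {a b c : E}

theorem colMap_apply (v : ℝ × ℝ × ℝ) :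
    colMap a b c v = v.1 • a + (v.2.1 • b + v.2.2 • c) := rfl

theorem colMap_injective (h : LinearIndependent ℝ ![a, b, c]) :
    Function.Injective (colMap a b c) := by
  rw [injective_iff_map_eq_zero]
  intro v hv
  have hcoeff : ∀ i, ![v.1, v.2.1, v.2.2] i = 0 := Fintype.linearIndependent_iff.1 h _ <| by
    rw [Fin.sum_univ_three, add_assoc]
    exact hv
  exact Prod.ext (hcoeff 0) (Prod.ext (hcoeff 1) (hcoeff 2))

theorem isInducing_colMap [T2Space E] (h : LinearIndependent ℝ ![a, b, c]) :
    IsInducing (colMap a b c) := by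
  have : ContinuousNeg E := .of_continuousConstSMul ℝ E
  have : IsTopologicalAddGroup E := {}
  exact (LinearMap.isClosedEmbedding_of_injective
    (LinearMap.ker_eq_bot.2 (colMap_injective h))).isInducing

end colMap

theorem contDiff_mulVec_single {𝕜 E m n : Type*} [NontriviallyNormedField 𝕜]
    [NormedAddCommGroup E] [NormedSpace 𝕜 E] [Fintype m] [Fintype n] [DecidableEq n]
    {k : WithTop ℕ∞} {R : E → Matrix m n 𝕜} {j : n} (hR : ∀ i, ContDiff 𝕜 k fun x => R x i j) :
    ContDiff 𝕜 k fun x => (R x).mulVec (Pi.single j 1) := by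
  simp only [Matrix.mulVec_single_one]
  exact contDiff_pi.2 hR

theorem linearIndependent_frame {R₀ : ℝ → M3} {s : ℝ} (hdet : (R₀ s).det ≠ 0) :
    LinearIndependent ℝ ![(R₀ s).mulVec (Pi.single 0 1), nu2 R₀ s, nu3 R₀ s] := by
  have hcols : ![(R₀ s).mulVec (Pi.single 0 1), nu2 R₀ s, nu3 R₀ s] = (R₀ s).col := by
    funext j
    fin_cases j <;> exact Matrix.mulVec_single_one (R₀ s) _
  rw [hcols]
  exact Matrix.linearIndependent_cols_of_det_ne_zero hdet

variable {γ : ℝ → Fin 3 → ℝ} {R₀ : ℝ → M3}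

theorem Psih_eq_Psih_one_smul (h : ℝ) (p : ℝ × ℝ × ℝ) :
    Psih γ R₀ h p = Psih γ R₀ 1 (p.1, h • p.2) := by
  simp only [Psih, Prod.smul_fst, Prod.smul_snd, smul_eq_mul, one_mul]

theorem Psih_core (h s : ℝ) : Psih γ R₀ h (s, 0) = γ s := by
  simp only [Psih, Prod.fst_zero, Prod.snd_zero, mul_zero, zero_smul, add_zero]

theorem hasStrictFDerivAt_Psih_one_core {γ' ν₂' ν₃' : Fin 3 → ℝ} {s : ℝ}
    (hγ : HasStrictDerivAt γ γ' s) (hν₂ : HasStrictDerivAt (nu2 R₀) ν₂' s)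
    (hν₃ : HasStrictDerivAt (nu3 R₀) ν₃' s) :
    HasStrictFDerivAt (Psih γ R₀ 1) (colMap γ' (nu2 R₀ s) (nu3 R₀ s)) (s, 0) := by
  have hs : HasStrictFDerivAt Prod.fst (ContinuousLinearMap.fst ℝ ℝ (ℝ × ℝ)) (s, 0) :=
    hasStrictFDerivAt_fst
  have hy : HasStrictFDerivAt Prod.snd (ContinuousLinearMap.snd ℝ ℝ (ℝ × ℝ)) (s, 0) :=
    hasStrictFDerivAt_snd
  have htube := ((hγ.hasStrictFDerivAt.comp (s, (0 : ℝ × ℝ)) hs).add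
      ((hy.fst.const_mul 1).smul (hν₂.hasStrictFDerivAt.comp (s, (0 : ℝ × ℝ)) hs))).add
      ((hy.snd.const_mul 1).smul (hν₃.hasStrictFDerivAt.comp (s, (0 : ℝ × ℝ)) hs))
  refine htube.congr_fderiv ?_
  ext v <;> simp [colMap_apply]

theorem Psih_injective_for_small_h_general {K : Set ℝ} {S : Set (ℝ × ℝ)} (hK : IsCompact K)
    (hS : Bornology.IsBounded S) (hγinj : InjOn γ K) (hγ : ∀ s ∈ K, ContDiffAt ℝ 1 γ s)
    (hν₂ : ∀ s ∈ K, ContDiffAt ℝ 1 (nu2 R₀) s) (hν₃ : ∀ s ∈ K, ContDiffAt ℝ 1 (nu3 R₀) s)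
    (hframe : ∀ s ∈ K, LinearIndependent ℝ ![deriv γ s, nu2 R₀ s, nu3 R₀ s]) :
    ∀ᶠ h in 𝓝[≠] 0, InjOn (Psih γ R₀ h) (K ×ˢ S) := by
  have hderiv (s : ℝ) (hs : s ∈ K) : HasStrictFDerivAt (Psih γ R₀ 1)
      (colMap (deriv γ s) (nu2 R₀ s) (nu3 R₀ s)) (s, 0) :=
    hasStrictFDerivAt_Psih_one_core ((hγ s hs).hasStrictDerivAt one_ne_zero)
      ((hν₂ s hs).hasStrictDerivAt one_ne_zero) ((hν₃ s hs).hasStrictDerivAt one_ne_zero)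
  have hcore : InjOn (fun s => Psih γ R₀ 1 (s, 0)) K := by simpa only [Psih_core] using hγinj
  have htube := eventually_injOn_prod_smul_of_hasStrictFDerivAt hK hcore hderiv
    (fun s hs => isInducing_colMap (hframe s hs)) ((NormedSpace.isVonNBounded_iff ℝ).2 hS)
  simpa only [← Psih_eq_Psih_one_smul] using htube

end

theorem Psih_injective_for_small_h
    (L : ℝ) (hL : 0 < L)
    (γ : ℝ → Fin 3 → ℝ) (hγ : ContDiff ℝ 2 γ)
    (harc : ∀ s ∈ Icc (0:ℝ) L, enorm3 (deriv γ s) = 1)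
    (hγinj : InjOn γ (Icc (0:ℝ) L))
    (R₀ : ℝ → M3) (hR₀C1 : ∀ i j, ContDiff ℝ 1 fun s => R₀ s i j)
    (hR₀SO : ∀ s ∈ Icc (0:ℝ) L, R₀ s ∈ SO3)
    (hR₀e1 : ∀ s ∈ Icc (0:ℝ) L, (R₀ s).mulVec (Pi.single 0 1) = deriv γ s)
    (Dset : Set (ℝ × ℝ)) (hDopen : IsOpen Dset) (hDconn : IsConnected Dset)
    (hDbdd : Bornology.IsBounded Dset) (hDvol : volume Dset = 1) :
    ∃ h₀ : ℝ, 0 < h₀ ∧ ∀ h ∈ Ioo (0:ℝ) h₀,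
      InjOn (Psih γ R₀ h) (Icc (0:ℝ) L ×ˢ closure Dset) := by
  have hν (j : Fin 3) : ContDiff ℝ 1 fun s => (R₀ s).mulVec (Pi.single j 1) :=
    contDiff_mulVec_single fun i => hR₀C1 i j
  have hframe (s : ℝ) (hs : s ∈ Icc 0 L) : LinearIndependent ℝ ![deriv γ s, nu2 R₀ s, nu3 R₀ s] :=
    hR₀e1 s hs ▸ linearIndependent_frame ((hR₀SO s hs).2 ▸ one_ne_zero)
  have hsmall := Psih_injective_for_small_h_general isCompact_Icc hDbdd.closure hγinj
    (fun _ _ => (hγ.of_le one_le_two).contDiffAt) (fun _ _ => (hν 1).contDiffAt)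
    (fun _ _ => (hν 2).contDiffAt) hframe
  exact (nhdsGT_basis 0).eventually_iff.1 (hsmall.filter_mono (nhdsGT_le_nhdsNE 0))
end
end

section
/- There exist δ > 0 and constants 0 < c ≤ C such that the map Ψ : [0,L] × ℝ² → ℝ³ defined by Ψ(s,y₂,y₃) := γ(s) + y₂ν₂(s) + y₃ν₃(s) satisfies c‖p − q‖ ≤ ‖Ψ(p) − Ψ(q)‖ ≤ C‖p − q‖ for all p, q ∈ [0,L] × cl(B_δ(0)); in particular Ψ is injective on this set (i.e., Ψ is bilipschitz on a uniform tubular neighbourhood of the curve γ). -/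
open MeasureTheory Set

noncomputable section

/-- The tubular-neighbourhood parametrization `Ψ(s,y₂,y₃) = γ(s) + y₂ν₂(s) + y₃ν₃(s)`. -/
def Psi (γ : ℝ → Fin 3 → ℝ) (R₀ : ℝ → M3) (p : ℝ × ℝ × ℝ) : Fin 3 → ℝ :=
  γ p.1 + p.2.1 • nu2 R₀ p.1 + p.2.2 • nu3 R₀ p.1

/-- The Euclidean norm of the difference of two points of `ℝ × ℝ²`. -/
def pdist (p q : ℝ × ℝ × ℝ) : ℝ :=
  Real.sqrt ((p.1 - q.1) ^ 2 + (p.2.1 - q.2.1) ^ 2 + (p.2.2 - q.2.2) ^ 2)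

/-!
The differential of `Ψ` at a point `(s, 0)` of the centre line is the matrix `R₀(s)`, which is
invertible, so by strict differentiability `Ψ` is bilipschitz near each such point. Near a pair of
distinct points of the centre line, `‖p - q‖` and `‖Ψ(p) - Ψ(q)‖` are continuous and, since `γ` is
injective, both nonzero. So the two quantities are comparable near every pair of points of the
centre line; these pairs form a compact set, which makes the constants uniform on a neighbourhood of
it, and this neighbourhood contains all pairs of points of a sufficiently thin tube.
-/

open Asymptotics Filter Matrix Metric Topology

theorem isTheta_nhdsSet_of_isCompact {X E F : Type*} [TopologicalSpace X]
    [SeminormedAddCommGroup E] [SeminormedAddCommGroup F] {S : Set X} (hS : IsCompact S)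
    {f : X → E} {g : X → F} (h : ∀ x ∈ S, f =Θ[𝓝 x] g) : f =Θ[𝓝ˢ S] g := by
  refine hS.induction_on (p := fun T => f =Θ[𝓝ˢ T] g) ?empty ?mono ?union ?nhds
  case empty => simp
  case mono => exact fun _ _ hsub hT => hT.mono (nhdsSet_mono hsub)
  case union => exact fun _ _ hT hT' => by rw [nhdsSet_union]; exact hT.sup hT'
  case nhds =>
    intro x hx
    obtain ⟨a, ha⟩ := (h x hx).1.bound
    obtain ⟨b, hb⟩ := (h x hx).2.bound
    obtain ⟨U, hU, hUo, hxU⟩ := _root_.eventually_nhds_iff.1 (ha.and hb)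
    refine ⟨U, mem_nhdsWithin_of_mem_nhds (hUo.mem_nhds hxU), ?_⟩
    rw [hUo.nhdsSet_eq]
    exact ⟨.of_bound a fun y hy => (hU y hy).1, .of_bound b fun y hy => (hU y hy).2⟩

theorem exists_mul_norm_le_and_norm_le_mul_of_isTheta {α E F : Type*}
    [SeminormedAddCommGroup E] [SeminormedAddCommGroup F] {l : Filter α} {f : α → E} {g : α → F}
    (h : f =Θ[l] g) :
    ∃ c C : ℝ, 0 < c ∧ c ≤ C ∧ ∀ᶠ x in l, c * ‖g x‖ ≤ ‖f x‖ ∧ ‖f x‖ ≤ C * ‖g x‖ := by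
  obtain ⟨a, -, ha⟩ := h.1.exists_pos
  obtain ⟨b, hb, hb'⟩ := h.2.exists_pos
  refine ⟨b⁻¹, max a b⁻¹, by positivity, le_max_right _ _, ?_⟩
  filter_upwards [ha.bound, hb'.bound] with x hfg hgf
  exact ⟨(inv_mul_le_iff₀ hb).2 hgf, hfg.trans (by gcongr; exact le_max_left _ _)⟩

theorem exists_forall_prod_closedBall_of_eventually {X Y : Type*} [TopologicalSpace X]
    [PseudoMetricSpace Y] {K : Set X} (hK : IsCompact K) {y : Y} {P : X × Y → X × Y → Prop}
    (h : ∀ᶠ x in 𝓝ˢ (K ×ˢ {y}) ×ˢ 𝓝ˢ (K ×ˢ {y}), P x.1 x.2) :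
    ∃ δ > 0, ∀ p ∈ K ×ˢ closedBall y δ, ∀ q ∈ K ×ˢ closedBall y δ, P p q := by
  obtain ⟨U, hU, hP⟩ := eventually_prod_self_iff.1 h
  rw [hK.nhdsSet_prod_eq isCompact_singleton, nhdsSet_singleton] at hU
  obtain ⟨V, hV, W, hW, hVW⟩ := mem_prod_iff.1 hU
  obtain ⟨δ, hδ, hδW⟩ := nhds_basis_closedBall.mem_iff.1 hW
  have hsub : K ×ˢ closedBall y δ ⊆ U :=
    (prod_mono (subset_of_mem_nhdsSet hV) hδW).trans hVW
  exact ⟨δ, hδ, fun p hp q hq => hP p (hsub hp) q (hsub hq)⟩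

theorem isTheta_sub_nhds_of_ne {E G : Type*} [NormedAddCommGroup E] [NormedAddCommGroup G]
    {f : E → G} {a b : E} (hfa : ContinuousAt f a) (hfb : ContinuousAt f b) (hab : a ≠ b)
    (hf : f a ≠ f b) :
    (fun p : E × E => f p.1 - f p.2) =Θ[𝓝 (a, b)] fun p => p.1 - p.2 := by
  have hlim : Tendsto (fun p : E × E => f p.1 - f p.2) (𝓝 (a, b)) (𝓝 (f a - f b)) :=
    (hfa.comp_of_eq continuousAt_fst rfl).sub (hfb.comp_of_eq continuousAt_snd rfl)
  have hlim_id : Tendsto (fun p : E × E => p.1 - p.2) (𝓝 (a, b)) (𝓝 (a - b)) :=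
    (continuous_fst.sub continuous_snd).tendsto (a, b)
  have hsub : f a - f b ≠ 0 := sub_ne_zero.2 hf
  have hsub_id : a - b ≠ 0 := sub_ne_zero.2 hab
  exact (((isEquivalent_const_iff_tendsto hsub).2 hlim).isTheta.trans
    (isTheta_const_const hsub hsub_id)).trans
    ((isEquivalent_const_iff_tendsto hsub_id).2 hlim_id).isTheta.symm

section

variable {𝕜 E F G : Type*} [NontriviallyNormedField 𝕜] [NormedAddCommGroup E] [NormedSpace 𝕜 E]
  [NormedAddCommGroup F] [NormedSpace 𝕜 F] [NormedAddCommGroup G] [NormedSpace 𝕜 G]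

theorem isTheta_sub_nhdsSet_of_hasStrictFDerivAt {f : E → G} {f' : E → E →L[𝕜] G} {A : Set E}
    (hA : IsCompact A) (hf : ∀ a ∈ A, HasStrictFDerivAt f (f' a) a)
    (hf' : ∀ a ∈ A, IsInducing (f' a)) (hinj : InjOn f A) :
    (fun p : E × E => f p.1 - f p.2) =Θ[𝓝ˢ A ×ˢ 𝓝ˢ A] fun p => p.1 - p.2 := by
  rw [← hA.nhdsSet_prod_eq hA]
  refine isTheta_nhdsSet_of_isCompact (hA.prod hA) ?_
  rintro ⟨a, b⟩ ⟨ha, hb⟩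
  rcases eq_or_ne a b with rfl | hab
  · exact (hf a ha).isTheta_sub (hf' a ha)
  · exact isTheta_sub_nhds_of_ne (hf a ha).continuousAt (hf b hb).continuousAt hab
      (hinj.ne ha hb hab)

/-- The parametrization `(s, y) ↦ γ(s) + N(s) y` of a tube around the image of `γ`; the linear map
`N(s)` embeds the model fibre `F` as the space of directions transverse to `γ` at `γ(s)`. -/
def tubeMap {B : Type*} (γ : B → G) (N : B → F →L[𝕜] G) (p : B × F) : G :=
  γ p.1 + N p.1 p.2

theorem hasStrictFDerivAt_tubeMap_zero {γ : E → G} {γ' : E →L[𝕜] G} {N : E → F →L[𝕜] G}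
    {N' : E →L[𝕜] F →L[𝕜] G} {s : E} (hγ : HasStrictFDerivAt γ γ' s)
    (hN : HasStrictFDerivAt N N' s) :
    HasStrictFDerivAt (tubeMap γ N) (γ'.coprod (N s)) (s, 0) := by
  have hfst : HasStrictFDerivAt Prod.fst (ContinuousLinearMap.fst 𝕜 E F) (s, 0) :=
    hasStrictFDerivAt_fst
  have hsnd : HasStrictFDerivAt Prod.snd (ContinuousLinearMap.snd 𝕜 E F) (s, 0) :=
    hasStrictFDerivAt_snd
  refine ((HasStrictFDerivAt.comp (s, 0) hγ hfst).add
    ((HasStrictFDerivAt.comp (s, 0) hN hfst).clm_apply hsnd)).congr_fderiv ?_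
  ext <;> simp

theorem isTheta_tubeMap_sub [CompleteSpace 𝕜] [FiniteDimensional 𝕜 E] [FiniteDimensional 𝕜 F]
    {γ : E → G} {γ' : E → E →L[𝕜] G} {N : E → F →L[𝕜] G} {N' : E → E →L[𝕜] F →L[𝕜] G} {K : Set E}
    (hK : IsCompact K) (hγ : ∀ s ∈ K, HasStrictFDerivAt γ (γ' s) s)
    (hN : ∀ s ∈ K, HasStrictFDerivAt N (N' s) s) (hinj : InjOn γ K)
    (hframe : ∀ s ∈ K, Function.Injective ((γ' s).coprod (N s))) :
    (fun p : (E × F) × (E × F) => tubeMap γ N p.1 - tubeMap γ N p.2)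
      =Θ[𝓝ˢ (K ×ˢ {0}) ×ˢ 𝓝ˢ (K ×ˢ {0})] fun p => p.1 - p.2 := by
  refine isTheta_sub_nhdsSet_of_hasStrictFDerivAt (f' := fun p => (γ' p.1).coprod (N p.1))
    (hK.prod isCompact_singleton) ?_ ?_ ?_
  · rintro ⟨s, _⟩ ⟨hs, rfl⟩
    exact hasStrictFDerivAt_tubeMap_zero (hγ s hs) (hN s hs)
  · rintro ⟨s, _⟩ ⟨hs, -⟩
    exact (LinearMap.isClosedEmbedding_of_injective
      (LinearMap.ker_eq_bot.2 (hframe s hs))).isInducing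
  · rintro ⟨s, _⟩ ⟨hs, rfl⟩ ⟨t, _⟩ ⟨ht, rfl⟩ hst
    simpa [hinj.eq_iff hs ht, tubeMap] using hst

end

theorem isTheta_enorm3 {α : Type*} (l : Filter α) (u : α → Fin 3 → ℝ) :
    (fun x => enorm3 (u x)) =Θ[l] u := by
  let e := (EuclideanSpace.equiv (Fin 3) ℝ).symm
  have h (v : Fin 3 → ℝ) : enorm3 v = ‖e v‖ := by simp [enorm3, EuclideanSpace.norm_eq, e]
  simp only [h, isTheta_norm_left]
  exact ⟨e.isBigO_comp u l, e.isBigO_comp_rev u l⟩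

theorem isTheta_pdist (l : Filter ((ℝ × ℝ × ℝ) × (ℝ × ℝ × ℝ))) :
    (fun x => pdist x.1 x.2) =Θ[l] fun x => x.1 - x.2 := by
  let v (x : (ℝ × ℝ × ℝ) × (ℝ × ℝ × ℝ)) : Fin 3 → ℝ :=
    ![x.1.1 - x.2.1, x.1.2.1 - x.2.2.1, x.1.2.2 - x.2.2.2]
  have hpdist : (fun x => pdist x.1 x.2) = fun x => enorm3 (v x) := by
    ext x
    simp [pdist, enorm3, v, Fin.sum_univ_three]
  have hv (x) : ‖v x‖ = ‖x.1 - x.2‖ := by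
    simp [v, Prod.norm_def, Pi.norm_def, Fin.univ_succ]
  rw [hpdist]
  exact (isTheta_enorm3 l v).trans (.of_norm_eventuallyEq_norm (.of_forall hv))

theorem pdist_eq_zero {p q : ℝ × ℝ × ℝ} : pdist p q = 0 ↔ p = q := by
  have h := (isTheta_pdist ⊤).eq_zero_iff
  simp only [eventually_top, sub_eq_zero] at h
  exact h (p, q)

theorem setOf_sq_add_sq_le_subset_closedBall {δ : ℝ} (hδ : 0 ≤ δ) :
    {y : ℝ × ℝ | y.1 ^ 2 + y.2 ^ 2 ≤ δ ^ 2} ⊆ closedBall 0 δ := by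
  intro y (hy : y.1 ^ 2 + y.2 ^ 2 ≤ δ ^ 2)
  rw [mem_closedBall_zero_iff, norm_prod_le_iff]
  exact ⟨abs_le_of_sq_le_sq (by linarith [sq_nonneg y.2]) hδ,
    abs_le_of_sq_le_sq (by linarith [sq_nonneg y.1]) hδ⟩

/-- The linear map `(y₂, y₃) ↦ y₂ν₂(s) + y₃ν₃(s)`, through which `Psi` is a `tubeMap`. -/
def normalFrame (R₀ : ℝ → M3) (s : ℝ) : ℝ × ℝ →L[ℝ] Fin 3 → ℝ :=
  (ContinuousLinearMap.fst ℝ ℝ ℝ).smulRight (nu2 R₀ s) +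
    (ContinuousLinearMap.snd ℝ ℝ ℝ).smulRight (nu3 R₀ s)

theorem Psi_eq_tubeMap (γ : ℝ → Fin 3 → ℝ) (R₀ : ℝ → M3) :
    Psi γ R₀ = tubeMap γ (normalFrame R₀) := by
  ext p : 1
  simp [Psi, tubeMap, normalFrame, add_assoc]

theorem contDiffAt_normalFrame {n : WithTop ℕ∞} {R₀ : ℝ → M3} {s : ℝ}
    (hR₀ : ∀ i j, ContDiffAt ℝ n (fun t => R₀ t i j) s) :
    ContDiffAt ℝ n (normalFrame R₀) s := by
  have hcol (j : Fin 3) : ContDiffAt ℝ n (fun t => R₀ t *ᵥ Pi.single j 1) s :=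
    contDiffAt_pi.2 fun i => by simpa using hR₀ i j
  exact (contDiffAt_const.smulRight (hcol 1)).add (contDiffAt_const.smulRight (hcol 2))

theorem fderiv_coprod_normalFrame_apply {γ : ℝ → Fin 3 → ℝ} {R₀ : ℝ → M3} {s : ℝ}
    (hR₀e1 : R₀ s *ᵥ Pi.single 0 1 = deriv γ s) (p : ℝ × ℝ × ℝ) :
    (fderiv ℝ γ s).coprod (normalFrame R₀ s) p = R₀ s *ᵥ ![p.1, p.2.1, p.2.2] := by
  have hcoord : ![p.1, p.2.1, p.2.2] =
      p.1 • Pi.single 0 1 + p.2.1 • Pi.single 1 1 + p.2.2 • Pi.single 2 1 := by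
    ext i
    fin_cases i <;> simp
  rw [hcoord, mulVec_add, mulVec_add, mulVec_smul, mulVec_smul, mulVec_smul, hR₀e1]
  simp [normalFrame, nu2, nu3, fderiv_eq_smul_deriv, add_assoc]

theorem injective_fderiv_coprod_normalFrame {γ : ℝ → Fin 3 → ℝ} {R₀ : ℝ → M3} {s : ℝ}
    (hR₀ : IsUnit (R₀ s)) (hR₀e1 : R₀ s *ᵥ Pi.single 0 1 = deriv γ s) :
    Function.Injective ((fderiv ℝ γ s).coprod (normalFrame R₀ s)) := by
  intro p q hpq
  simp only [fderiv_coprod_normalFrame_apply hR₀e1] at hpq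
  simpa [Prod.ext_iff] using mulVec_injective_of_isUnit hR₀ hpq

theorem isUnit_of_mem_SO3 {R : M3} (hR : R ∈ SO3) : IsUnit R :=
  IsUnit.of_mul_eq_one_right _ hR.1

theorem isTheta_enorm3_Psi_sub_pdist {K : Set ℝ} (hK : IsCompact K) {γ : ℝ → Fin 3 → ℝ}
    (hγ : ∀ s ∈ K, ContDiffAt ℝ 1 γ s) (hγinj : InjOn γ K) {R₀ : ℝ → M3}
    (hR₀C1 : ∀ s ∈ K, ∀ i j, ContDiffAt ℝ 1 (fun t => R₀ t i j) s)
    (hR₀unit : ∀ s ∈ K, IsUnit (R₀ s)) (hR₀e1 : ∀ s ∈ K, R₀ s *ᵥ Pi.single 0 1 = deriv γ s) :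
    (fun x => enorm3 (Psi γ R₀ x.1 - Psi γ R₀ x.2))
      =Θ[𝓝ˢ (K ×ˢ {0}) ×ˢ 𝓝ˢ (K ×ˢ {0})] fun x => pdist x.1 x.2 := by
  have htube := isTheta_tubeMap_sub hK
    (fun s hs => (hγ s hs).hasStrictFDerivAt one_ne_zero)
    (fun s hs => (contDiffAt_normalFrame (hR₀C1 s hs)).hasStrictFDerivAt one_ne_zero) hγinj
    (fun s hs => injective_fderiv_coprod_normalFrame (hR₀unit s hs) (hR₀e1 s hs))
  rw [Psi_eq_tubeMap]
  exact ((isTheta_enorm3 _ _).trans htube).trans (isTheta_pdist _).symm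

theorem injOn_of_mul_pdist_le_enorm3 {f : ℝ × ℝ × ℝ → Fin 3 → ℝ} {S : Set (ℝ × ℝ × ℝ)} {c : ℝ}
    (hc : 0 < c) (h : ∀ p ∈ S, ∀ q ∈ S, c * pdist p q ≤ enorm3 (f p - f q)) : InjOn f S := by
  intro p hp q hq hpq
  have hle : c * pdist p q ≤ 0 := by simpa [hpq, enorm3] using h p hp q hq
  exact pdist_eq_zero.1 ((nonpos_of_mul_nonpos_right hle hc).antisymm (Real.sqrt_nonneg _))

theorem Psi_bilipschitz_on_tubular_neighbourhood_general {K : Set ℝ} (hK : IsCompact K)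
    {γ : ℝ → Fin 3 → ℝ} (hγ : ∀ s ∈ K, ContDiffAt ℝ 1 γ s) (hγinj : InjOn γ K) {R₀ : ℝ → M3}
    (hR₀C1 : ∀ s ∈ K, ∀ i j, ContDiffAt ℝ 1 (fun t => R₀ t i j) s)
    (hR₀unit : ∀ s ∈ K, IsUnit (R₀ s)) (hR₀e1 : ∀ s ∈ K, R₀ s *ᵥ Pi.single 0 1 = deriv γ s) :
    ∃ δ : ℝ, 0 < δ ∧ ∃ c C : ℝ, 0 < c ∧ c ≤ C ∧
      (∀ p ∈ K ×ˢ {y : ℝ × ℝ | y.1 ^ 2 + y.2 ^ 2 ≤ δ ^ 2},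
        ∀ q ∈ K ×ˢ {y : ℝ × ℝ | y.1 ^ 2 + y.2 ^ 2 ≤ δ ^ 2},
          c * pdist p q ≤ enorm3 (Psi γ R₀ p - Psi γ R₀ q) ∧
          enorm3 (Psi γ R₀ p - Psi γ R₀ q) ≤ C * pdist p q) ∧
      InjOn (Psi γ R₀) (K ×ˢ {y : ℝ × ℝ | y.1 ^ 2 + y.2 ^ 2 ≤ δ ^ 2}) := by
  obtain ⟨c, C, hc, hcC, hnear⟩ := exists_mul_norm_le_and_norm_le_mul_of_isTheta
    (isTheta_enorm3_Psi_sub_pdist hK hγ hγinj hR₀C1 hR₀unit hR₀e1)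
  simp only [pdist, enorm3, Real.norm_of_nonneg (Real.sqrt_nonneg _)] at hnear
  obtain ⟨δ, hδ, hball⟩ := exists_forall_prod_closedBall_of_eventually
    (P := fun p q => c * pdist p q ≤ enorm3 (Psi γ R₀ p - Psi γ R₀ q) ∧
      enorm3 (Psi γ R₀ p - Psi γ R₀ q) ≤ C * pdist p q) hK hnear
  have htube : K ×ˢ {y : ℝ × ℝ | y.1 ^ 2 + y.2 ^ 2 ≤ δ ^ 2} ⊆ K ×ˢ closedBall 0 δ :=
    prod_mono_right (setOf_sq_add_sq_le_subset_closedBall hδ.le)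
  exact ⟨δ, hδ, c, C, hc, hcC, fun p hp q hq => hball p (htube hp) q (htube hq),
    injOn_of_mul_pdist_le_enorm3 hc fun p hp q hq => (hball p (htube hp) q (htube hq)).1⟩

theorem Psi_bilipschitz_on_tubular_neighbourhood
    (L : ℝ) (hL : 0 < L)
    (γ : ℝ → Fin 3 → ℝ) (hγ : ContDiff ℝ 2 γ)
    (harc : ∀ s ∈ Icc (0:ℝ) L, enorm3 (deriv γ s) = 1)
    (hγinj : InjOn γ (Icc (0:ℝ) L))
    (R₀ : ℝ → M3) (hR₀C1 : ∀ i j, ContDiff ℝ 1 fun s => R₀ s i j)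
    (hR₀SO : ∀ s ∈ Icc (0:ℝ) L, R₀ s ∈ SO3)
    (hR₀e1 : ∀ s ∈ Icc (0:ℝ) L, (R₀ s).mulVec (Pi.single 0 1) = deriv γ s) :
    ∃ δ : ℝ, 0 < δ ∧ ∃ c C : ℝ, 0 < c ∧ c ≤ C ∧
      (∀ p ∈ Icc (0:ℝ) L ×ˢ {y : ℝ × ℝ | y.1 ^ 2 + y.2 ^ 2 ≤ δ ^ 2},
        ∀ q ∈ Icc (0:ℝ) L ×ˢ {y : ℝ × ℝ | y.1 ^ 2 + y.2 ^ 2 ≤ δ ^ 2},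
          c * pdist p q ≤ enorm3 (Psi γ R₀ p - Psi γ R₀ q) ∧
          enorm3 (Psi γ R₀ p - Psi γ R₀ q) ≤ C * pdist p q) ∧
      InjOn (Psi γ R₀) (Icc (0:ℝ) L ×ˢ {y : ℝ × ℝ | y.1 ^ 2 + y.2 ^ 2 ≤ δ ^ 2}) :=
  Psi_bilipschitz_on_tubular_neighbourhood_general isCompact_Icc
    (fun _ _ => (hγ.of_le one_le_two).contDiffAt) hγinj (fun _ _ i j => (hR₀C1 i j).contDiffAt)
    (fun s hs => isUnit_of_mem_SO3 (hR₀SO s hs)) hR₀e1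
end
end

section
/- Let Q : ℝ^{3×3} → ℝ be a nonnegative quadratic form (Q(G) = B(G,G) for a symmetric bilinear form B, with Q ≥ 0). Let D ⊆ ℝ² be a bounded open set of area 1 with ∫_D ξ dξdζ = ∫_D ζ dξdζ = 0. Let R₀ ∈ SO(3), P ∈ ℝ^{3×3}, ĝ ∈ ℝ³, and let α̂ be a C¹ map from an open neighbourhood of cl(D) to ℝ³. Define α̃(ξ,ζ) := α̂(ξ,ζ) − ξ∫_D ∂_ξα̂ dξdζ − ζ∫_D ∂_ζα̂ dξdζ. Then ∫_D Q( R₀ ( P(0,ξ,ζ)ᵀ + ĝ | ∂_ξα̂ | ∂_ζα̂ ) R₀ᵀ ) dξdζ = ∫_D Q( R₀ ( P(0,ξ,ζ)ᵀ | ∂_ξα̃ | ∂_ζα̃ ) R₀ᵀ ) dξdζ + Q( R₀ ( ĝ | ∫_D ∂_ξα̂ dξdζ | ∫_D ∂_ζα̂ dξdζ ) R₀ᵀ ); in particular the left-hand side is greater than or equal to ∫_D Q( R₀ ( P(0,ξ,ζ)ᵀ | ∂_ξα̃ | ∂_ζα̃ ) R₀ᵀ ) dξdζ. -/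
open MeasureTheory Set

noncomputable section

/-- Partial derivative of a map `ℝ² → ℝ³` with respect to the first variable. -/
def dXi (α : ℝ × ℝ → Fin 3 → ℝ) (p : ℝ × ℝ) : Fin 3 → ℝ :=
  deriv (fun t => α (t, p.2)) p.1

/-- Partial derivative of a map `ℝ² → ℝ³` with respect to the second variable. -/
def dZeta (α : ℝ × ℝ → Fin 3 → ℝ) (p : ℝ × ℝ) : Fin 3 → ℝ :=
  deriv (fun t => α (p.1, t)) p.2

/-- `α̃(ξ,ζ) := α̂(ξ,ζ) − ξ∫_D ∂_ξα̂ − ζ∫_D ∂_ζα̂`. -/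
def tildeAlpha (Dset : Set (ℝ × ℝ)) (α : ℝ × ℝ → Fin 3 → ℝ) (p : ℝ × ℝ) : Fin 3 → ℝ :=
  α p - p.1 • (∫ q in Dset, dXi α q) - p.2 • (∫ q in Dset, dZeta α q)

/-!
Since `∂_ξα̃ = ∂_ξα̂ - ∫_D ∂_ξα̂` and `∂_ζα̃ = ∂_ζα̂ - ∫_D ∂_ζα̂`, and `P(0,ξ,ζ)ᵀ` has mean zero on
`D`, the columns `(P(0,ξ,ζ)ᵀ | ∂_ξα̃ | ∂_ζα̃)` are exactly
`(P(0,ξ,ζ)ᵀ + ĝ | ∂_ξα̂ | ∂_ζα̂)` minus their mean `(ĝ | ∫_D ∂_ξα̂ | ∫_D ∂_ζα̂)`. The splitting is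
therefore the identity `E[B(X, X)] = E[B(X - EX, X - EX)] + B(EX, EX)` for the uniform probability
measure on `D`.
-/

section Integration

theorem integral_bilin_sub_integral {E F G X : Type*}
    [NormedAddCommGroup E] [NormedSpace ℝ E] [CompleteSpace E]
    [NormedAddCommGroup F] [NormedSpace ℝ F] [CompleteSpace F]
    [NormedAddCommGroup G] [NormedSpace ℝ G] [CompleteSpace G]
    [MeasurableSpace X] {μ : Measure X} [IsProbabilityMeasure μ]
    (B : E →L[ℝ] F →L[ℝ] G) {f : X → E} {g : X → F} (hf : Integrable f μ) (hg : Integrable g μ)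
    (hfg : Integrable (fun x => B (f x) (g x)) μ) :
    ∫ x, B (f x - ∫ y, f y ∂μ) (g x - ∫ y, g y ∂μ) ∂μ =
      (∫ x, B (f x) (g x) ∂μ) - B (∫ x, f x ∂μ) (∫ x, g x ∂μ) := by
  set a := ∫ x, f x ∂μ
  set b := ∫ x, g x ∂μ
  have hBg : Integrable (fun x => B a (g x)) μ := (B a).integrable_comp hg
  have hBf : Integrable (fun x => B (f x) b) μ := (B.flip b).integrable_comp hf
  have mean_right : ∫ x, B a (g x) ∂μ = B a b := (B a).integral_comp_comm hg
  have mean_left : ∫ x, B (f x) b ∂μ = B a b := (B.flip b).integral_comp_comm hf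
  calc ∫ x, B (f x - a) (g x - b) ∂μ
      = ∫ x, (B (f x) (g x) - B a (g x) - (B (f x) b - B a b)) ∂μ := by
        simp only [map_sub, sub_apply]
    _ = (∫ x, B (f x) (g x) ∂μ) - B a b - (B a b - B a b) := by
        rw [integral_sub, integral_sub hfg hBg, integral_sub hBf (integrable_const _), mean_left,
          mean_right, integral_const, probReal_univ, one_smul]
        exacts [hfg.sub hBg, hBf.sub (integrable_const _)]
    _ = (∫ x, B (f x) (g x) ∂μ) - B a b := by rw [sub_self, sub_zero]

theorem integral_continuousLinearMap_eq_zero_of_moments {E F G : Type*}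
    [NormedAddCommGroup E] [NormedSpace ℝ E] [CompleteSpace E] [MeasurableSpace E]
    [NormedAddCommGroup F] [NormedSpace ℝ F] [CompleteSpace F] [MeasurableSpace F]
    [NormedAddCommGroup G] [NormedSpace ℝ G] [CompleteSpace G]
    {μ : Measure (E × F)} (L : E × F →L[ℝ] G) (hμ : Integrable (fun p => p) μ)
    (h₁ : ∫ p, p.1 ∂μ = 0) (h₂ : ∫ p, p.2 ∂μ = 0) : ∫ p, L p ∂μ = 0 := by
  rw [L.integral_comp_comm hμ, integral_pair hμ.fst hμ.snd, h₁, h₂, Prod.mk_zero_zero, map_zero]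

theorem memLp_restrict_of_continuousOn_closure {X E : Type*} [TopologicalSpace X]
    [TopologicalSpace.PseudoMetrizableSpace X] [MeasurableSpace X] [OpensMeasurableSpace X]
    [NormedAddCommGroup E] {μ : Measure X} [IsFiniteMeasureOnCompacts μ] {f : X → E} {s : Set X}
    (hs : IsCompact (closure s)) (hf : ContinuousOn f (closure s)) (q : ENNReal) :
    MemLp f q (μ.restrict s) := by
  have hmeas : MeasurableSet (closure s) := isClosed_closure.measurableSet
  have : IsFiniteMeasure (μ.restrict (closure s)) :=
    ⟨by simpa only [Measure.restrict_apply_univ] using hs.measure_lt_top⟩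
  obtain ⟨C, hC⟩ := hs.exists_bound_of_continuousOn hf
  exact (MemLp.of_bound (hf.aestronglyMeasurable_of_isCompact hs hmeas) C
    (ae_restrict_of_forall_mem hmeas hC)).mono_measure (Measure.restrict_mono_set μ subset_closure)

end Integration

section PartialDerivatives

theorem hasDerivAt_slice_fst {𝕜 E F : Type*} [NontriviallyNormedField 𝕜]
    [NormedAddCommGroup E] [NormedSpace 𝕜 E] [NormedAddCommGroup F] [NormedSpace 𝕜 F]
    {f : 𝕜 × E → F} {f' : 𝕜 × E →L[𝕜] F} {p : 𝕜 × E} (h : HasFDerivAt f f' p) :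
    HasDerivAt (fun t => f (t, p.2)) (f' (1, 0)) p.1 :=
  HasFDerivAt.comp_hasDerivAt (l := f) p.1 h
    ((hasDerivAt_id p.1).prodMk (hasDerivAt_const p.1 p.2))

theorem hasDerivAt_slice_snd {𝕜 E F : Type*} [NontriviallyNormedField 𝕜]
    [NormedAddCommGroup E] [NormedSpace 𝕜 E] [NormedAddCommGroup F] [NormedSpace 𝕜 F]
    {f : E × 𝕜 → F} {f' : E × 𝕜 →L[𝕜] F} {p : E × 𝕜} (h : HasFDerivAt f f' p) :
    HasDerivAt (fun t => f (p.1, t)) (f' (0, 1)) p.2 :=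
  HasFDerivAt.comp_hasDerivAt (l := f) p.2 h
    ((hasDerivAt_const p.2 p.1).prodMk (hasDerivAt_id p.2))

variable {α : ℝ × ℝ → Fin 3 → ℝ} {U : Set (ℝ × ℝ)}

theorem continuousOn_dXi (hα : ContDiffOn ℝ 1 α U) (hU : IsOpen U) : ContinuousOn (dXi α) U :=
  ((hα.continuousOn_fderiv_of_isOpen hU le_rfl).clm_apply continuousOn_const).congr fun _ hp =>
    (hasDerivAt_slice_fst ((hα.contDiffAt (hU.mem_nhds hp)).differentiableAt
      one_ne_zero).hasFDerivAt).deriv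

theorem continuousOn_dZeta (hα : ContDiffOn ℝ 1 α U) (hU : IsOpen U) :
    ContinuousOn (dZeta α) U :=
  ((hα.continuousOn_fderiv_of_isOpen hU le_rfl).clm_apply continuousOn_const).congr fun _ hp =>
    (hasDerivAt_slice_snd ((hα.contDiffAt (hU.mem_nhds hp)).differentiableAt
      one_ne_zero).hasFDerivAt).deriv

/-- The map `α` has classical partial derivatives almost everywhere on `D`, and they are square
integrable: the regularity under which the energies of `α` on `D` are finite. Differentiability is
recorded separately because `dXi α` and `dZeta α` are `0` where it fails. -/
structure HasSquareIntegrableGradient (D : Set (ℝ × ℝ)) (α : ℝ × ℝ → Fin 3 → ℝ) : Prop where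
  differentiableAt_fst :
    ∀ᵐ p ∂volume.restrict D, DifferentiableAt ℝ (fun t => α (t, p.2)) p.1
  differentiableAt_snd :
    ∀ᵐ p ∂volume.restrict D, DifferentiableAt ℝ (fun t => α (p.1, t)) p.2
  memLp_dXi : MemLp (dXi α) 2 (volume.restrict D)
  memLp_dZeta : MemLp (dZeta α) 2 (volume.restrict D)

theorem HasSquareIntegrableGradient.of_contDiffOn {D : Set (ℝ × ℝ)}
    (hD : Bornology.IsBounded D) (hU : IsOpen U) (hDU : closure D ⊆ U)
    (hα : ContDiffOn ℝ 1 α U) : HasSquareIntegrableGradient D α := by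
  have hdiff : ∀ᵐ p ∂volume.restrict D, DifferentiableAt ℝ α p :=
    ae_mono (Measure.restrict_mono_set volume (subset_closure.trans hDU))
      (ae_restrict_of_forall_mem hU.measurableSet fun p hp =>
        (hα.contDiffAt (hU.mem_nhds hp)).differentiableAt one_ne_zero)
  exact {
    differentiableAt_fst :=
      hdiff.mono fun p hp => (hasDerivAt_slice_fst hp.hasFDerivAt).differentiableAt
    differentiableAt_snd :=
      hdiff.mono fun p hp => (hasDerivAt_slice_snd hp.hasFDerivAt).differentiableAt
    memLp_dXi := memLp_restrict_of_continuousOn_closure hD.isCompact_closure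
      ((continuousOn_dXi hα hU).mono hDU) 2
    memLp_dZeta := memLp_restrict_of_continuousOn_closure hD.isCompact_closure
      ((continuousOn_dZeta hα hU).mono hDU) 2 }

theorem dXi_tildeAlpha (D : Set (ℝ × ℝ)) {p : ℝ × ℝ}
    (h : DifferentiableAt ℝ (fun t => α (t, p.2)) p.1) :
    dXi (tildeAlpha D α) p = dXi α p - ∫ q in D, dXi α q := by
  have hderiv := (h.hasDerivAt.sub ((hasDerivAt_id p.1).smul_const (∫ q in D, dXi α q))).sub
    (hasDerivAt_const p.1 (p.2 • ∫ q in D, dZeta α q))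
  rw [one_smul, sub_zero] at hderiv
  exact hderiv.deriv

theorem dZeta_tildeAlpha (D : Set (ℝ × ℝ)) {p : ℝ × ℝ}
    (h : DifferentiableAt ℝ (fun t => α (p.1, t)) p.2) :
    dZeta (tildeAlpha D α) p = dZeta α p - ∫ q in D, dZeta α q := by
  have hderiv := (h.hasDerivAt.sub (hasDerivAt_const p.2 (p.1 • ∫ q in D, dXi α q))).sub
    ((hasDerivAt_id p.2).smul_const (∫ q in D, dZeta α q))
  rw [one_smul, sub_zero] at hderiv
  exact hderiv.deriv

end PartialDerivatives

section Strain

/-- The linear map `(a, b, c) ↦ R (a | b | c) Rᵀ`. The columns are kept as a triple because, unlike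
`M3`, the product carries a norm, which the integrals need. -/
def conjColumns (R : M3) : (Fin 3 → ℝ) × (Fin 3 → ℝ) × (Fin 3 → ℝ) →ₗ[ℝ] M3 where
  toFun v := R * colMat v.1 v.2.1 v.2.2 * R.transpose
  map_add' v w := by
    rw [← add_mul, ← mul_add]
    congr 2
    ext i j
    fin_cases j <;> rfl
  map_smul' c v := by
    rw [RingHom.id_apply, ← smul_mul_assoc, ← mul_smul_comm]
    congr 2
    ext i j
    fin_cases j <;> rfl

/-- The continuous linear map `(ξ, ζ) ↦ P(0,ξ,ζ)ᵀ`, the varying part of the first column of the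
strain. -/
def crossSectionMap (P : M3) : ℝ × ℝ →L[ℝ] Fin 3 → ℝ :=
  (P.mulVecLin ∘ₗ
    { toFun := fun p => ![0, p.1, p.2]
      map_add' := fun p q => by simp
      map_smul' := fun c p => by simp }).toContinuousLinearMap

/-- The columns of the strain `(P(0,ξ,ζ)ᵀ + ĝ | ∂_ξα̂ | ∂_ζα̂)` at the point `p = (ξ, ζ)`, as a
triple. -/
def strainColumns (P : M3) (g : Fin 3 → ℝ) (α : ℝ × ℝ → Fin 3 → ℝ) (p : ℝ × ℝ) :
    (Fin 3 → ℝ) × (Fin 3 → ℝ) × (Fin 3 → ℝ) :=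
  (P.mulVec ![0, p.1, p.2] + g, dXi α p, dZeta α p)

variable {α : ℝ × ℝ → Fin 3 → ℝ}

theorem memLp_strainColumns {μ : Measure (ℝ × ℝ)} [IsFiniteMeasure μ] {q : ENNReal}
    (hμ : MemLp (fun p => p) q μ) (hξ : MemLp (dXi α) q μ) (hζ : MemLp (dZeta α) q μ)
    (P : M3) (g : Fin 3 → ℝ) : MemLp (strainColumns P g α) q μ :=
  memLp_prod_iff.2 ⟨(hμ.continuousLinearMap_comp (crossSectionMap P)).add (memLp_const g),
    memLp_prod_iff.2 ⟨hξ, hζ⟩⟩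

theorem integral_strainColumns {μ : Measure (ℝ × ℝ)} [IsProbabilityMeasure μ]
    (hμ : Integrable (fun p => p) μ) (h₁ : ∫ p, p.1 ∂μ = 0) (h₂ : ∫ p, p.2 ∂μ = 0)
    (hξ : Integrable (dXi α) μ) (hζ : Integrable (dZeta α) μ) (P : M3) (g : Fin 3 → ℝ) :
    ∫ p, strainColumns P g α p ∂μ = (g, ∫ p, dXi α p ∂μ, ∫ p, dZeta α p ∂μ) := by
  have hP : Integrable (fun p => crossSectionMap P p) μ := (crossSectionMap P).integrable_comp hμ
  have first_column : ∫ p, crossSectionMap P p + g ∂μ = g := by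
    rw [integral_add hP (integrable_const g),
      integral_continuousLinearMap_eq_zero_of_moments _ hμ h₁ h₂, integral_const, probReal_univ,
      one_smul, zero_add]
  calc ∫ p, strainColumns P g α p ∂μ
      = (∫ p, crossSectionMap P p + g ∂μ, ∫ p, (dXi α p, dZeta α p) ∂μ) :=
        integral_pair (hP.add (integrable_const g)) (hξ.prodMk hζ)
    _ = (g, ∫ p, dXi α p ∂μ, ∫ p, dZeta α p ∂μ) := by rw [first_column, integral_pair hξ hζ]

theorem strainColumns_sub_mean (D : Set (ℝ × ℝ)) (P : M3) (g : Fin 3 → ℝ) {p : ℝ × ℝ}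
    (hξ : DifferentiableAt ℝ (fun t => α (t, p.2)) p.1)
    (hζ : DifferentiableAt ℝ (fun t => α (p.1, t)) p.2) :
    strainColumns P g α p - (g, ∫ q in D, dXi α q, ∫ q in D, dZeta α q) =
      (P.mulVec ![0, p.1, p.2], dXi (tildeAlpha D α) p, dZeta (tildeAlpha D α) p) := by
  rw [dXi_tildeAlpha D hξ, dZeta_tildeAlpha D hζ, strainColumns, Prod.mk_sub_mk, Prod.mk_sub_mk,
    add_sub_cancel_right]

end Strain

theorem optimal_g_is_zero_splitting_general
    (B : M3 →ₗ[ℝ] M3 →ₗ[ℝ] ℝ) (hBnn : ∀ G, 0 ≤ B G G)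
    (Dset : Set (ℝ × ℝ)) (hDvol : volume Dset = 1)
    (hDmom : MemLp (fun p : ℝ × ℝ => p) 2 (volume.restrict Dset))
    (hmom1 : (∫ p in Dset, p.1) = 0) (hmom2 : (∫ p in Dset, p.2) = 0)
    (R₀ : M3) (P : M3) (g : Fin 3 → ℝ)
    (α : ℝ × ℝ → Fin 3 → ℝ)
    (hα : HasSquareIntegrableGradient Dset α) :
    (∫ p in Dset,
        B (R₀ * colMat (P.mulVec ![0, p.1, p.2] + g) (dXi α p) (dZeta α p) * R₀.transpose)
          (R₀ * colMat (P.mulVec ![0, p.1, p.2] + g) (dXi α p) (dZeta α p) * R₀.transpose)) =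
      (∫ p in Dset,
        B (R₀ * colMat (P.mulVec ![0, p.1, p.2])
              (dXi (tildeAlpha Dset α) p) (dZeta (tildeAlpha Dset α) p) * R₀.transpose)
          (R₀ * colMat (P.mulVec ![0, p.1, p.2])
              (dXi (tildeAlpha Dset α) p) (dZeta (tildeAlpha Dset α) p) * R₀.transpose)) +
        B (R₀ * colMat g (∫ q in Dset, dXi α q) (∫ q in Dset, dZeta α q) * R₀.transpose)
          (R₀ * colMat g (∫ q in Dset, dXi α q) (∫ q in Dset, dZeta α q) * R₀.transpose) ∧
    (∫ p in Dset,
        B (R₀ * colMat (P.mulVec ![0, p.1, p.2] + g) (dXi α p) (dZeta α p) * R₀.transpose)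
          (R₀ * colMat (P.mulVec ![0, p.1, p.2] + g) (dXi α p) (dZeta α p) * R₀.transpose)) ≥
      (∫ p in Dset,
        B (R₀ * colMat (P.mulVec ![0, p.1, p.2])
              (dXi (tildeAlpha Dset α) p) (dZeta (tildeAlpha Dset α) p) * R₀.transpose)
          (R₀ * colMat (P.mulVec ![0, p.1, p.2])
              (dXi (tildeAlpha Dset α) p) (dZeta (tildeAlpha Dset α) p) * R₀.transpose)) := by
  have : IsProbabilityMeasure (volume.restrict Dset) := ⟨by rwa [Measure.restrict_apply_univ]⟩
  let C := (B.compl₁₂ (conjColumns R₀) (conjColumns R₀)).toContinuousBilinearMap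
  have strain_memLp := memLp_strainColumns hDmom hα.memLp_dXi hα.memLp_dZeta P g
  have strain_int := strain_memLp.integrable one_le_two
  have strain_mean := integral_strainColumns (hDmom.integrable one_le_two) hmom1 hmom2
    (hα.memLp_dXi.integrable one_le_two) (hα.memLp_dZeta.integrable one_le_two) P g
  have strain_centered : ∀ᵐ p ∂volume.restrict Dset,
      strainColumns P g α p - ∫ q in Dset, strainColumns P g α q =
        (P.mulVec ![0, p.1, p.2], dXi (tildeAlpha Dset α) p, dZeta (tildeAlpha Dset α) p) := by
    filter_upwards [hα.differentiableAt_fst, hα.differentiableAt_snd] with p hξ hζ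
    rw [strain_mean, strainColumns_sub_mean Dset P g hξ hζ]
  have splitting := integral_bilin_sub_integral C strain_int strain_int
    (memLp_one_iff_integrable.1 (C.memLp_of_bilin 1 strain_memLp strain_memLp))
  rw [integral_congr_ae (strain_centered.mono fun p hp => congrArg₂ (fun u v => C u v) hp hp),
    strain_mean, eq_sub_iff_add_eq] at splitting
  exact ⟨splitting.symm, (le_add_of_nonneg_right (hBnn _)).trans_eq splitting⟩

theorem optimal_g_is_zero_splitting
    (B : M3 →ₗ[ℝ] M3 →ₗ[ℝ] ℝ) (hBsymm : ∀ X Y, B X Y = B Y X)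
    (hBnn : ∀ G, 0 ≤ B G G)
    (Dset : Set (ℝ × ℝ)) (hDopen : IsOpen Dset) (hDbdd : Bornology.IsBounded Dset)
    (hDvol : volume Dset = 1)
    (hmom1 : (∫ p in Dset, p.1) = 0) (hmom2 : (∫ p in Dset, p.2) = 0)
    (R₀ : M3) (hR₀ : R₀ ∈ SO3) (P : M3) (g : Fin 3 → ℝ)
    (α : ℝ × ℝ → Fin 3 → ℝ)
    (U : Set (ℝ × ℝ)) (hUopen : IsOpen U) (hUsub : closure Dset ⊆ U)
    (hα : ContDiffOn ℝ 1 α U) :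
    (∫ p in Dset,
        B (R₀ * colMat (P.mulVec ![0, p.1, p.2] + g) (dXi α p) (dZeta α p) * R₀.transpose)
          (R₀ * colMat (P.mulVec ![0, p.1, p.2] + g) (dXi α p) (dZeta α p) * R₀.transpose)) =
      (∫ p in Dset,
        B (R₀ * colMat (P.mulVec ![0, p.1, p.2])
              (dXi (tildeAlpha Dset α) p) (dZeta (tildeAlpha Dset α) p) * R₀.transpose)
          (R₀ * colMat (P.mulVec ![0, p.1, p.2])
              (dXi (tildeAlpha Dset α) p) (dZeta (tildeAlpha Dset α) p) * R₀.transpose)) +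
        B (R₀ * colMat g (∫ q in Dset, dXi α q) (∫ q in Dset, dZeta α q) * R₀.transpose)
          (R₀ * colMat g (∫ q in Dset, dXi α q) (∫ q in Dset, dZeta α q) * R₀.transpose) ∧
    (∫ p in Dset,
        B (R₀ * colMat (P.mulVec ![0, p.1, p.2] + g) (dXi α p) (dZeta α p) * R₀.transpose)
          (R₀ * colMat (P.mulVec ![0, p.1, p.2] + g) (dXi α p) (dZeta α p) * R₀.transpose)) ≥
      (∫ p in Dset,
        B (R₀ * colMat (P.mulVec ![0, p.1, p.2])
              (dXi (tildeAlpha Dset α) p) (dZeta (tildeAlpha Dset α) p) * R₀.transpose)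
          (R₀ * colMat (P.mulVec ![0, p.1, p.2])
              (dXi (tildeAlpha Dset α) p) (dZeta (tildeAlpha Dset α) p) * R₀.transpose)) :=
  optimal_g_is_zero_splitting_general B hBnn Dset hDvol
    (memLp_restrict_of_continuousOn_closure hDbdd.isCompact_closure continuousOn_id 2)
    hmom1 hmom2 R₀ P g α (.of_contDiffOn hDbdd hUopen hUsub hα)
end
end
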